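/- arXiv:1011.1044 — 2 statements merged into one kernel-verified Lean document; each statement's English description precedes it below -/
import Mathlib

section
/- Let A = {A_0,…,A_d} be an association scheme on v vertices with principal idempotents E_0,…,E_d and matrix of eigenvalues P (which is invertible), and let n ≥ 1. Then for all x, y ∈ V^n, in the polynomial ring ℂ[t_0,…,t_d] one has Σ_α (P^{-1}t)^α·(A_α)_{x,y} = Σ_β t^β·(E_β)_{x,y}, where both sums are over all vectors of d+1 nonnegative integers summing to n, and (P^{-1}t)^α = Π_{i=0}^{d} (Σ_{j=0}^{d} (P^{-1})_{i,j}·t_j)^{α(i)}. -/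
open Matrix Finset MvPolynomial

/-- An association scheme with `d` classes on the finite vertex set `V`. -/
structure AssocScheme (d : ℕ) (V : Type) [Fintype V] [DecidableEq V] : Type where
  A : Fin (d + 1) → Matrix V V ℂ
  entries_zero_or_one : ∀ i x y, A i x y = 0 ∨ A i x y = 1
  A_zero : A 0 = 1
  A_sum : ∑ i, A i = Matrix.of fun _ _ => 1
  transpose_mem : ∀ i, ∃ j, (A i)ᵀ = A j
  mul_eq_lin_comb : ∀ i j, ∃ p : Fin (d + 1) → ℂ, A i * A j = ∑ k, p k • A k
  mul_comm' : ∀ i j, A i * A j = A j * A i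

open Classical in
/-- `h(x,y)`: the vector whose `r`-th entry counts coordinates `j` with `(A_r)_{x_j,y_j} = 1`. -/
noncomputable def AssocScheme.profile {d : ℕ} {V : Type} [Fintype V] [DecidableEq V]
    (S : AssocScheme d V) (n : ℕ) (x y : Fin n → V) : Fin (d + 1) → ℕ :=
  fun r => (Finset.univ.filter fun j : Fin n => S.A r (x j) (y j) = 1).card

open Classical in
/-- The matrix `A_α` of the generalized Hamming scheme `H(n,A)`. -/
noncomputable def AssocScheme.ham {d : ℕ} {V : Type} [Fintype V] [DecidableEq V]
    (S : AssocScheme d V) (n : ℕ) (α : Fin (d + 1) → ℕ) :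
    Matrix (Fin n → V) (Fin n → V) ℂ :=
  Matrix.of fun x y => if S.profile n x y = α then 1 else 0

open Classical in
/-- The matrix `E_β` built from the idempotents `E_0, …, E_d`. -/
noncomputable def idemMat {d : ℕ} {V : Type} [Fintype V] [DecidableEq V]
    (E : Fin (d + 1) → Matrix V V ℂ) (n : ℕ) (β : Fin (d + 1) → ℕ) :
    Matrix (Fin n → V) (Fin n → V) ℂ :=
  Matrix.of fun x y =>
    ∑ f ∈ Finset.univ.filter
        (fun f : Fin n → Fin (d + 1) =>
          ∀ r, (Finset.univ.filter fun j => f j = r).card = β r),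
      ∏ j, E (f j) (x j) (y j)

/-!
Write `Φ_M(t) = ∏ k, ∑ j, (M_j)_{x_k, y_k} t_j` for a family of matrices `M`. Multiplying out and
collecting the choice functions `f` by their fibre sizes shows that `Φ_M` is the generating function
of the matrices `idemMat M n β`. Since exactly one `A_i` is nonzero at each pair of vertices,
`A_α` is itself `idemMat A n α`. The theorem thus reads `Φ_A(P⁻¹ t) = Φ_E(t)`, which holds factor by
factor because `E_j = ∑ i, (P⁻¹)_{i,j} A_i`.
-/

section MultinomialExpansion

variable {κ ι R : Type*} [Fintype κ] [Fintype ι] [DecidableEq ι]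

theorem card_fiber_mem_piAntidiag (f : κ → ι) :
    (fun r ↦ #{k | f k = r}) ∈ piAntidiag univ (Fintype.card κ) := by
  simpa using (card_eq_sum_card_fiberwise (s := univ) (t := univ) (f := f) (by simp)).symm

theorem prod_comp_eq_prod_pow_card_fiber [CommMonoid R] (f : κ → ι) (t : ι → R) :
    ∏ k, t (f k) = ∏ r, t r ^ #{k | f k = r} := by
  simp only [← prod_fiberwise' univ f t, prod_const]

theorem prod_sum_mul_eq_sum_piAntidiag [DecidableEq κ] [CommSemiring R]
    (a : κ → ι → R) (t : ι → R) :
    ∏ k, ∑ j, a k j * t j =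
      ∑ β ∈ piAntidiag univ (Fintype.card κ),
        (∑ f : κ → ι with ∀ r, #{k | f k = r} = β r, ∏ k, a k (f k)) * ∏ j, t j ^ β j := by
  rw [prod_univ_sum, Fintype.piFinset_univ,
    ← sum_fiberwise_of_maps_to fun f _ ↦ card_fiber_mem_piAntidiag f]
  refine sum_congr rfl fun β _ ↦ ?_
  simp only [sum_mul, funext_iff]
  refine sum_congr rfl fun f hf ↦ ?_
  have fiber_card : ∀ r, #{k | f k = r} = β r := (mem_filter.1 hf).2
  simp only [prod_mul_distrib, prod_comp_eq_prod_pow_card_fiber f t, fiber_card]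

end MultinomialExpansion

theorem sum_map_idemMat_mul_prod_pow {V : Type} [Fintype V] [DecidableEq V] {d : ℕ} {R : Type*}
    [CommSemiring R] (φ : ℂ →+* R) (M : Fin (d + 1) → Matrix V V ℂ) (n : ℕ) (x y : Fin n → V)
    (t : Fin (d + 1) → R) :
    ∑ β ∈ Finset.Nat.antidiagonalTuple (d + 1) n, φ (idemMat M n β x y) * ∏ j, t j ^ β j =
      ∏ k, ∑ j, φ (M j (x k) (y k)) * t j := by
  rw [prod_sum_mul_eq_sum_piAntidiag, Fintype.card_fin, piAntidiag_univ_fin_eq_antidiagonalTuple]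
  simp only [idemMat, of_apply, map_sum, map_prod]
  -- The two sides decide `∀ r, _` by different instances.
  congr!

theorem existsUnique_eq_one_of_sum_eq_one {ι R : Type*} [Fintype ι] [NonAssocSemiring R]
    [CharZero R] {a : ι → R} (zero_or_one : ∀ i, a i = 0 ∨ a i = 1) (sum_eq_one : ∑ i, a i = 1) :
    ∃! i, a i = 1 := by
  classical
  have a_eq_ite : ∀ i, a i = if a i = 1 then 1 else 0 := fun i ↦ by
    rcases zero_or_one i with h | h <;> simp [h]
  have card_eq_one : #{i | a i = 1} = 1 := by
    rw [sum_congr rfl fun i _ ↦ a_eq_ite i, sum_boole] at sum_eq_one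
    exact_mod_cast sum_eq_one
  simpa [card_eq_one_iff_existsUnique] using card_eq_one

theorem eq_sum_inv_smul_of_eq_sum_smul {ι R M : Type*} [Fintype ι] [DecidableEq ι] [CommRing R]
    [AddCommMonoid M] [Module R M] {P : Matrix ι ι R} (hP : IsUnit P.det) {a e : ι → M}
    (h : ∀ i, a i = ∑ j, P j i • e j) (j : ι) :
    e j = ∑ i, P⁻¹ i j • a i := by
  symm
  calc ∑ i, P⁻¹ i j • a i = ∑ l, (P * P⁻¹) l j • e l := by
        simp only [h, smul_sum, smul_smul, mul_apply, sum_smul, mul_comm (P⁻¹ _ j)]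
        exact sum_comm
    _ = e j := by simp [mul_nonsing_inv P hP, one_apply]

namespace AssocScheme

variable {V : Type} [Fintype V] [DecidableEq V] {d : ℕ} (S : AssocScheme d V)

theorem existsUnique_A_apply_eq_one (a b : V) : ∃! r, S.A r a b = 1 := by
  refine existsUnique_eq_one_of_sum_eq_one (fun i ↦ S.entries_zero_or_one i a b) ?_
  simpa only [Matrix.sum_apply, of_apply] using congr_fun₂ S.A_sum a b

/-- The index of the class containing the pair `(a, b)`, that is, of the unique `A_i` whose
`(a, b)` entry is nonzero; it expresses the entries of all `A_i` as Kronecker deltas. -/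
noncomputable def classIndex (a b : V) : Fin (d + 1) :=
  (S.existsUnique_A_apply_eq_one a b).choose

theorem A_apply_eq_one_iff {i : Fin (d + 1)} {a b : V} :
    S.A i a b = 1 ↔ S.classIndex a b = i :=
  have spec := (S.existsUnique_A_apply_eq_one a b).choose_spec
  ⟨fun h ↦ (spec.2 i h).symm, fun h ↦ h ▸ spec.1⟩

theorem A_apply (i : Fin (d + 1)) (a b : V) :
    S.A i a b = if S.classIndex a b = i then 1 else 0 := by
  rcases S.entries_zero_or_one i a b with h | h <;> simp [← A_apply_eq_one_iff, h]

theorem prod_A_apply {n : ℕ} (f : Fin n → Fin (d + 1)) (x y : Fin n → V) :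
    ∏ k, S.A (f k) (x k) (y k) = if (fun k ↦ S.classIndex (x k) (y k)) = f then 1 else 0 := by
  simp only [A_apply, prod_ite_zero, prod_const_one, mem_univ, true_imp_iff, funext_iff]

theorem ham_eq_idemMat_A (n : ℕ) (α : Fin (d + 1) → ℕ) : S.ham n α = idemMat S.A n α := by
  ext x y
  simp only [ham, profile, idemMat, of_apply, prod_A_apply, A_apply_eq_one_iff, sum_ite_eq,
    mem_filter, mem_univ, true_and, funext_iff (g := α)]

end AssocScheme

theorem ham_inv_generating_function_general {V : Type} [Fintype V] [DecidableEq V]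
    {d e : ℕ} (S : AssocScheme d V) {E : Fin (e + 1) → Matrix V V ℂ}
    {Q : Matrix (Fin (d + 1)) (Fin (e + 1)) ℂ} (hE : ∀ j, E j = ∑ i, Q i j • S.A i)
    (n : ℕ) (x y : Fin n → V) :
    ∑ α ∈ Finset.Nat.antidiagonalTuple (d + 1) n,
        C (S.ham n α x y) * ∏ i, (∑ j, C (Q i j) * X j) ^ α i =
      ∑ β ∈ Finset.Nat.antidiagonalTuple (e + 1) n,
        C (idemMat E n β x y) * ∏ j, (X j : MvPolynomial (Fin (e + 1)) ℂ) ^ β j := by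
  simp only [S.ham_eq_idemMat_A, sum_map_idemMat_mul_prod_pow]
  refine prod_congr rfl fun k _ ↦ ?_
  calc ∑ i, C (S.A i (x k) (y k)) * ∑ j, C (Q i j) * X j
      = ∑ j, ∑ i, C (Q i j * S.A i (x k) (y k)) * X j := by
        simp only [mul_sum, C_mul, mul_left_comm, mul_assoc]
        exact sum_comm
    _ = ∑ j, C (E j (x k) (y k)) * X j := by
        simp only [hE, Matrix.sum_apply, Matrix.smul_apply, smul_eq_mul, map_sum, sum_mul]

/-- `Σ_α (P⁻¹t)^α (A_α)_{x,y} = Σ_β t^β (E_β)_{x,y}`. -/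
theorem ham_inv_generating_function {V : Type} [Fintype V] [DecidableEq V]
    {d : ℕ} (S : AssocScheme d V)
    (E : Fin (d + 1) → Matrix V V ℂ)
    (hE0 : E 0 = (Fintype.card V : ℂ)⁻¹ • Matrix.of fun _ _ => 1)
    (hEsum : ∑ j, E j = 1)
    (hEherm : ∀ j, (E j)ᴴ = E j)
    (hEidem : ∀ j, E j * E j = E j)
    (hEorth : ∀ j k, j ≠ k → E j * E k = 0)
    (P : Matrix (Fin (d + 1)) (Fin (d + 1)) ℂ)
    (hPunit : IsUnit P.det)
    (hAE : ∀ i, S.A i = ∑ j, P j i • E j)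
    (n : ℕ) (hn : 1 ≤ n) (x y : Fin n → V) :
    (∑ α ∈ Finset.Nat.antidiagonalTuple (d + 1) n,
        MvPolynomial.C (S.ham n α x y) *
          ∏ i : Fin (d + 1),
            (∑ j : Fin (d + 1), MvPolynomial.C (P⁻¹ i j) * MvPolynomial.X j) ^ α i)
      = ∑ β ∈ Finset.Nat.antidiagonalTuple (d + 1) n,
          MvPolynomial.C (idemMat E n β x y) *
            ∏ j : Fin (d + 1), MvPolynomial.X j ^ β j := by
  exact ham_inv_generating_function_general S (eq_sum_inv_smul_of_eq_sum_smul hPunit hAE) n x y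
end

section
/- (MacWilliams theorem for the complete weight enumerator over ℤ/4.) Let n ≥ 1 and let C be a subgroup of (ℤ/4)^n. Then, as polynomials over ℂ, cwe_{C⊥}(s,t,u,v) = (1/|C|)·cwe_C(s+t+u+v, s+it−u−iv, s−t+u−v, s−it−u+iv), where i denotes the imaginary unit. -/
open Finset MvPolynomial

/-- `n_r(x)`: the number of coordinates of `x ∈ (ℤ/4)ⁿ` equal to `r` (mod 4). -/
def countCoord (n : ℕ) (x : Fin n → ZMod 4) (r : ℕ) : ℕ :=
  (Finset.univ.filter fun j => x j = (r : ZMod 4)).card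

/-- The complete weight enumerator `cwe_C(s,t,u,v) = Σ_{x ∈ C} s^{n₀} t^{n₁} u^{n₂} v^{n₃}`,
in the variables `X 0, X 1, X 2, X 3`. -/
noncomputable def cwe (n : ℕ) (Cd : Finset (Fin n → ZMod 4)) : MvPolynomial (Fin 4) ℂ :=
  ∑ x ∈ Cd, ∏ r : Fin 4, MvPolynomial.X r ^ countCoord n x r

/-- The dual code `C⊥ = {y : Σ_j x_j y_j = 0 in ℤ/4 for all x ∈ C}`. -/
def dualZ4Code (n : ℕ) (Cd : Finset (Fin n → ZMod 4)) : Finset (Fin n → ZMod 4) :=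
  Finset.univ.filter fun y => ∀ x ∈ Cd, ∑ j, x j * y j = 0

/-!
Expanding the product of the substituted linear forms over the coordinates of a codeword `x` gives
`∑ y, ψ (x ⬝ᵥ y) ∏ j, X (y j)`. Summing over the code, the coefficient of the monomial of `y` is the
sum of the character `x ↦ ψ (x ⬝ᵥ y)` over the code; it vanishes unless this character is trivial,
which for primitive `ψ` means that `y` lies in the dual code. Over `ℤ/4` one takes `ψ a = i ^ a`.
-/

section LinearCode

variable {R ι K : Type*} [CommRing R] [Fintype ι] [CommSemiring K]

/-- The dual of a linear code over a commutative ring, with respect to the dot product. -/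
def dualCode (D : Submodule R (ι → R)) : Submodule R (ι → R) :=
  D.orthogonalBilin (dotProductBilin R R)

/-- The complete weight enumerator of a linear code over `R`, with one variable for each element
of `R`: the codeword `x` contributes the monomial `∏ j, X (x j)`. -/
noncomputable def completeWeightEnumerator (K : Type*) [CommSemiring K]
    (D : Submodule R (ι → R)) [Fintype D] : MvPolynomial R K :=
  ∑ x : D, ∏ j, X (x.1 j)

/-- The Fourier transform of the variables of `MvPolynomial R K` with respect to the additive
character `ψ`: the linear form substituted for `X b` in the MacWilliams identity. -/
noncomputable def fourierForm [Fintype R] (ψ : AddChar R K) (b : R) : MvPolynomial R K :=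
  ∑ a, C (ψ (b * a)) * X a

theorem mem_dualCode {D : Submodule R (ι → R)} {y : ι → R} :
    y ∈ dualCode D ↔ ∀ x ∈ D, x ⬝ᵥ y = 0 :=
  Iff.rfl

theorem addChar_dotProduct {M : Type*} [CommMonoid M] (ψ : AddChar R M) (x y : ι → R) :
    ψ (x ⬝ᵥ y) = ∏ j, ψ (x j * y j) :=
  map_prod ψ.toMonoidHom (fun j => Multiplicative.ofAdd (x j * y j)) univ

theorem mem_dualCode_iff_addChar_eq_one {M : Type*} [CommMonoid M] {ψ : AddChar R M}
    (hψ : ψ.IsPrimitive) {D : Submodule R (ι → R)} {y : ι → R} :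
    y ∈ dualCode D ↔ ∀ x ∈ D, ψ (x ⬝ᵥ y) = 1 := by
  rw [mem_dualCode]
  refine ⟨fun hy x hx => by rw [hy x hx, ψ.map_zero_eq_one], fun hy x hx => ?_⟩
  by_contra hxy
  -- Scaling the codeword `x` by `r` turns the hypothesis into triviality of a shift of `ψ`.
  refine hψ hxy (DFunLike.ext _ _ fun r => ?_)
  rw [AddChar.mulShift_apply, mul_comm, ← smul_eq_mul, ← smul_dotProduct,
    hy _ (D.smul_mem r hx), AddChar.one_apply]

theorem sum_addChar_dotProduct [IsDomain K] {ψ : AddChar R K} (hψ : ψ.IsPrimitive)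
    (D : Submodule R (ι → R)) [Fintype D] (y : ι → R) [Decidable (y ∈ dualCode D)] :
    ∑ x : D, ψ (x.1 ⬝ᵥ y) = if y ∈ dualCode D then (Fintype.card D : K) else 0 := by
  classical
  let pairing : D →+ R := ((dotProductBilin R R).flip y ∘ₗ D.subtype).toAddMonoidHom
  have pairing_trivial_iff : ψ.compAddMonoidHom pairing = 0 ↔ y ∈ dualCode D := by
    rw [mem_dualCode_iff_addChar_eq_one hψ, AddChar.eq_zero_iff, Subtype.forall]
    rfl
  calc ∑ x : D, ψ (x.1 ⬝ᵥ y)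
      = ∑ x : D, ψ.compAddMonoidHom pairing x := rfl
    _ = if y ∈ dualCode D then (Fintype.card D : K) else 0 := by
        simp only [AddChar.sum_eq_ite, pairing_trivial_iff]

theorem prod_fourierForm [Fintype R] [DecidableEq ι] (ψ : AddChar R K) (x : ι → R) :
    ∏ j, fourierForm ψ (x j) = ∑ y : ι → R, C (ψ (x ⬝ᵥ y)) * ∏ j, X (y j) := by
  simp only [fourierForm, Fintype.prod_sum, prod_mul_distrib, addChar_dotProduct, map_prod]

/-- Primitive characters are the generating characters, so over `K = ℂ` the rings `R` covered here
are exactly the finite commutative Frobenius rings. -/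
theorem macwilliams_cwe_z4_general [Fintype R] [IsDomain K] {ψ : AddChar R K}
    (hψ : ψ.IsPrimitive) (D : Submodule R (ι → R)) [Fintype D] [Fintype (dualCode D)] :
    aeval (fourierForm ψ) (completeWeightEnumerator K D) =
      (Fintype.card D : K) • completeWeightEnumerator K (dualCode D) := by
  classical
  calc aeval (fourierForm ψ) (completeWeightEnumerator K D)
      = ∑ x : D, ∏ j, fourierForm ψ (x.1 j) := by
        simp only [completeWeightEnumerator, map_sum, map_prod, aeval_X]
    _ = ∑ y : ι → R, C (∑ x : D, ψ (x.1 ⬝ᵥ y)) * ∏ j, X (y j) := by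
        simp only [prod_fourierForm, map_sum, sum_mul]
        exact sum_comm
    _ = ∑ y : ι → R with y ∈ dualCode D, C (Fintype.card D : K) * ∏ j, X (y j) := by
        simp only [sum_addChar_dotProduct hψ, sum_filter, apply_ite C, map_zero, ite_mul, zero_mul]
    _ = (Fintype.card D : K) • completeWeightEnumerator K (dualCode D) := by
        rw [← mul_sum, ← smul_eq_C_mul, completeWeightEnumerator]
        congr 1
        exact sum_subtype _ (by simp) _

end LinearCode

theorem finEquiv_eq_natCast {N : ℕ} [NeZero N] (a : Fin N) :
    ZMod.finEquiv N a = ((a : ℕ) : ZMod N) := by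
  cases N with
  | zero => exact a.elim0
  | succ N => exact (Fin.cast_val_eq_self a).symm

theorem rename_fourierForm_zmodChar {K : Type*} [CommSemiring K] {N : ℕ} [NeZero N] {ζ : K}
    (hζ : ζ ^ N = 1) (b : ZMod N) :
    rename (ZMod.finEquiv N).symm (fourierForm (AddChar.zmodChar N hζ) b) =
      ∑ a : Fin N, C (ζ ^ (((ZMod.finEquiv N).symm b : ℕ) * a)) * X a := by
  obtain ⟨b, rfl⟩ := (ZMod.finEquiv N).surjective b
  rw [fourierForm, ← Equiv.sum_comp (ZMod.finEquiv N).toEquiv, map_sum]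
  refine sum_congr rfl fun a _ => ?_
  simp only [map_mul, rename_C, rename_X, RingEquiv.toEquiv_eq_coe, EquivLike.coe_coe,
    RingEquiv.symm_apply_apply]
  rw [finEquiv_eq_natCast, finEquiv_eq_natCast, ← Nat.cast_mul, AddChar.zmodChar_apply']

theorem prod_pow_countCoord {M : Type*} [CommMonoid M] {n : ℕ} (x : Fin n → ZMod 4)
    (g : Fin 4 → M) :
    ∏ r : Fin 4, g r ^ countCoord n x r = ∏ j, g ((ZMod.finEquiv 4).symm (x j)) := by
  rw [← prod_fiberwise' univ (fun j => (ZMod.finEquiv 4).symm (x j)) g]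
  refine prod_congr rfl fun r _ => ?_
  simp only [prod_const, countCoord, RingEquiv.symm_apply_eq, finEquiv_eq_natCast]

theorem cwe_eq_rename {n : ℕ} {Cd : Finset (Fin n → ZMod 4)}
    {D : Submodule (ZMod 4) (Fin n → ZMod 4)} [Fintype D] (hD : ∀ x, x ∈ Cd ↔ x ∈ D) :
    cwe n Cd = rename (ZMod.finEquiv 4).symm (completeWeightEnumerator ℂ D) := by
  simp only [cwe, prod_pow_countCoord, completeWeightEnumerator, map_sum, map_prod, rename_X]
  exact sum_subtype Cd hD _

theorem mem_dualZ4Code_iff {n : ℕ} {Cd : Finset (Fin n → ZMod 4)}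
    {D : Submodule (ZMod 4) (Fin n → ZMod 4)} (hD : ∀ x, x ∈ Cd ↔ x ∈ D) (y : Fin n → ZMod 4) :
    y ∈ dualZ4Code n Cd ↔ y ∈ dualCode D := by
  simp only [dualZ4Code, mem_filter_univ, hD, mem_dualCode, dotProduct]

theorem rename_fourierForm_zmodChar_I (b : ZMod 4) :
    rename (ZMod.finEquiv 4).symm (fourierForm (AddChar.zmodChar 4 Complex.I_pow_four) b) =
      (![X 0 + X 1 + X 2 + X 3,
         X 0 + C Complex.I * X 1 - X 2 - C Complex.I * X 3,
         X 0 - X 1 + X 2 - X 3,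
         X 0 - C Complex.I * X 1 - X 2 + C Complex.I * X 3] : Fin 4 → MvPolynomial (Fin 4) ℂ)
        ((ZMod.finEquiv 4).symm b) := by
  rw [rename_fourierForm_zmodChar]
  generalize (ZMod.finEquiv 4).symm b = c
  fin_cases c <;>
    simp [-map_pow, -C_pow, Fin.sum_univ_four, Complex.I_pow_eq_pow_mod 6,
      Complex.I_pow_eq_pow_mod 9] <;> ring

/-- MacWilliams theorem for the complete weight enumerator over `ℤ/4`:
`cwe_{C⊥}(s,t,u,v) = |C|⁻¹ cwe_C(s+t+u+v, s+it-u-iv, s-t+u-v, s-it-u+iv)`. -/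
theorem macwilliams_cwe_z4 (n : ℕ) (hn : 1 ≤ n)
    (Cd : Finset (Fin n → ZMod 4))
    (hC0 : (0 : Fin n → ZMod 4) ∈ Cd)
    (hCsub : ∀ x ∈ Cd, ∀ y ∈ Cd, x - y ∈ Cd) :
    cwe n (dualZ4Code n Cd)
      = (Cd.card : ℂ)⁻¹ •
          MvPolynomial.aeval
            ![MvPolynomial.X 0 + MvPolynomial.X 1 + MvPolynomial.X 2 + MvPolynomial.X 3,
              MvPolynomial.X 0 + MvPolynomial.C Complex.I * MvPolynomial.X 1
                - MvPolynomial.X 2 - MvPolynomial.C Complex.I * MvPolynomial.X 3,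
              MvPolynomial.X 0 - MvPolynomial.X 1 + MvPolynomial.X 2 - MvPolynomial.X 3,
              MvPolynomial.X 0 - MvPolynomial.C Complex.I * MvPolynomial.X 1
                - MvPolynomial.X 2 + MvPolynomial.C Complex.I * MvPolynomial.X 3]
            (cwe n Cd) := by
  classical
  let D : Submodule (ZMod 4) (Fin n → ZMod 4) := AddSubgroup.toZModSubmodule 4 <|
    .ofSub Cd ⟨0, hC0⟩ (by simpa only [← sub_eq_add_neg] using! hCsub)
  have mem_Cd_iff : ∀ x, x ∈ Cd ↔ x ∈ D := fun _ => Iff.rfl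
  have card_eq : Cd.card = Fintype.card D := (Fintype.card_of_subtype Cd mem_Cd_iff).symm
  have card_ne_zero : (Cd.card : ℂ) ≠ 0 := Nat.cast_ne_zero.2 (card_ne_zero_of_mem hC0)
  rw [eq_inv_smul_iff₀ card_ne_zero, card_eq, cwe_eq_rename (mem_dualZ4Code_iff mem_Cd_iff),
    cwe_eq_rename mem_Cd_iff, aeval_rename, ← map_smul,
    ← macwilliams_cwe_z4_general
      (AddChar.zmodChar_primitive_of_primitive_root 4 Complex.isPrimitiveRoot_I),
    comp_aeval_apply]
  simp only [rename_fourierForm_zmodChar_I, Function.comp_def]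
end
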